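/- Let Λ be a cyclic Nakayama algebra of infinite global dimension and let M be a finitely generated Λ-module of infinite projective dimension. Then there exists k ≥ 0 such that Ω^i(M) is Ω-periodic for all i ≥ k. -/

import Mathlib

/-!
Every finitely generated `Λ`-module is a finite direct sum of uniserial modules. A nonzero
finitely generated uniserial module has a unique maximal submodule, so it is a quotient of some
`P i`, and this quotient map is a projective cover. Since `P i` is itself uniserial, the syzygy of
a uniserial module is a submodule of `P i`, hence uniserial or zero
(`IsUniserial.exists_syzygy`). Taking direct sums of projective covers, the syzygy of a sum of `n`
uniserial modules is again a sum of `n` uniserial modules, some possibly zero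
(`IsUniserialSum.exists_syzygy`).

As `P i` is uniserial of finite length, it has only finitely many submodules; hence there are
finitely many uniserial modules up to isomorphism, and finitely many sums of `n` of them
(`exists_finite_uniserialSum`). So two of the syzygies `Ω^a M`, `Ω^b M` with `a < b` are
isomorphic. Syzygies are unique up to isomorphism (`IsSyzygy.equiv`), so
`Ω^(i + (b - a)) M ≅ Ω^i M` for all `i ≥ a`.
-/


/-!
Common definitions: Igusa–Todorov φ-function, syzygies, and cyclic Nakayama
algebras presented by monomial relations, following E. Sen,
"The φ-dimension of cyclic Nakayama algebras".
-/

noncomputable section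

namespace PhiDim

variable (Λ : Type) [Ring Λ]

/-- A module is *uniserial* if its submodules are totally ordered by inclusion. -/
def IsUniserial (M : ModuleCat.{0} Λ) : Prop :=
  ∀ N₁ N₂ : Submodule Λ M, N₁ ≤ N₂ ∨ N₂ ≤ N₁

/-- A module is *indecomposable* if it is nonzero and admits no nontrivial
direct sum decomposition. -/
def Indec (M : ModuleCat.{0} Λ) : Prop :=
  Nontrivial M ∧ ∀ N N' : Submodule Λ M, IsCompl N N' → N = ⊥ ∨ N' = ⊥

/-- `X` is (isomorphic to) a direct summand of `M`. -/
def IsSummand (X M : ModuleCat.{0} Λ) : Prop :=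
  ∃ N N' : Submodule Λ M, IsCompl N N' ∧ Nonempty (X ≃ₗ[Λ] N)

/-- `f : P → M` is a projective cover: `P` is projective, `f` is surjective and
its kernel is superfluous in `P`. -/
def IsProjCover {P M : ModuleCat.{0} Λ} (f : P →ₗ[Λ] M) : Prop :=
  Module.Projective Λ P ∧ Function.Surjective f ∧
    ∀ N : Submodule Λ P, N ⊔ LinearMap.ker f = ⊤ → N = ⊤

/-- `Y` is (isomorphic to) the first syzygy `Ω M`, i.e. the kernel of a
projective cover of `M`. -/
def IsSyzygy (Y M : ModuleCat.{0} Λ) : Prop :=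
  ∃ (P : ModuleCat.{0} Λ) (f : P →ₗ[Λ] M), IsProjCover Λ f ∧
    Nonempty (Y ≃ₗ[Λ] LinearMap.ker f)

/-- `Y` is (isomorphic to) the `n`-th syzygy `Ω^n M`. -/
def IsNthSyzygy : ℕ → ModuleCat.{0} Λ → ModuleCat.{0} Λ → Prop
  | 0, Y, M => Nonempty (Y ≃ₗ[Λ] M)
  | n + 1, Y, M => ∃ Z : ModuleCat.{0} Λ, IsSyzygy Λ Z M ∧ IsNthSyzygy n Y Z

/-- `M` is `Ω`-periodic: `Ω^k M ≅ M` for some `k ≥ 1`. -/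
def IsPeriodic (M : ModuleCat.{0} Λ) : Prop :=
  ∃ k : ℕ, 1 ≤ k ∧ IsNthSyzygy Λ k M M

/-- Projective dimension at most `n` (via minimal projective resolutions:
the `n`-th syzygy is projective). -/
def PdimLE (M : ModuleCat.{0} Λ) (n : ℕ) : Prop :=
  ∃ Y : ModuleCat.{0} Λ, IsNthSyzygy Λ n Y M ∧ Module.Projective Λ Y

/-- `M` has infinite projective dimension. -/
def HasInfinitePdim (M : ModuleCat.{0} Λ) : Prop :=
  ¬ ∃ n : ℕ, PdimLE Λ M n

/-- The (left) global dimension is at most `n`: every finitely generated module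
has projective dimension at most `n`. -/
def GlobalDimLE (n : ℕ) : Prop :=
  ∀ M : ModuleCat.{0} Λ, Module.Finite Λ M → PdimLE Λ M n

/-- `Λ` has infinite global dimension. -/
def HasInfiniteGlobalDim : Prop := ¬ ∃ n : ℕ, GlobalDimLE Λ n

/-- `M` has composition length `n`. -/
def HasLength (M : ModuleCat.{0} Λ) (n : ℕ) : Prop :=
  ∃ s : CompositionSeries (Submodule Λ M), s.head = ⊥ ∧ s.last = ⊤ ∧ s.length = n

/-- The socle of a uniserial module: the smallest nonzero submodule. -/
def socle (M : Type) [AddCommGroup M] [Module Λ M] : Submodule Λ M :=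
  sInf {N : Submodule Λ M | N ≠ ⊥}

/-- The radical of a uniserial (local) module: the largest proper submodule. -/
def radical (M : Type) [AddCommGroup M] [Module Λ M] : Submodule Λ M :=
  sSup {N : Submodule Λ M | N ≠ ⊤}

/-- `soc M ≅ T`. -/
def SocIso (M T : ModuleCat.{0} Λ) : Prop :=
  Nonempty (socle Λ M ≃ₗ[Λ] T)

/-- `top M = M / rad M ≅ T`. -/
def TopIso (M T : ModuleCat.{0} Λ) : Prop :=
  Nonempty ((M ⧸ radical Λ M) ≃ₗ[Λ] T)

/-- `T` is a composition factor (a simple subquotient) of `M`. -/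
def IsCompFactorOf (T M : ModuleCat.{0} Λ) : Prop :=
  ∃ (N₁ : Submodule Λ M) (N₀ : Submodule Λ N₁),
    Nonempty ((N₁ ⧸ N₀) ≃ₗ[Λ] T)

/-- The number of composition factors of a composition series `s` of `M`
isomorphic to `T`. -/
def factorCount (M : ModuleCat.{0} Λ) (s : CompositionSeries (Submodule Λ M))
    (T : ModuleCat.{0} Λ) : ℕ :=
  Nat.card {i : Fin s.length //
    Nonempty ((s i.succ ⧸ Submodule.comap (s i.succ).subtype (s i.castSucc)) ≃ₗ[Λ] T)}

/-! ### The Igusa–Todorov function φ -/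

/-- Finitely generated modules. -/
def FGMod := {M : ModuleCat.{0} Λ // Module.Finite Λ M}

/-- Generators of the relations defining `K₀`: `[C] - [A] - [B]` for `C ≅ A ⊕ B`,
and `[P]` for `P` projective. -/
def K0RelSet : Set (FreeAbelianGroup (FGMod Λ)) :=
  {x | ∃ A B C : FGMod Λ, Nonempty ((C.1 : Type) ≃ₗ[Λ] ((A.1 : Type) × (B.1 : Type))) ∧
        x = FreeAbelianGroup.of C - FreeAbelianGroup.of A - FreeAbelianGroup.of B} ∪
  {x | ∃ P : FGMod Λ, Module.Projective Λ P.1 ∧ x = FreeAbelianGroup.of P}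

def K0Rel : AddSubgroup (FreeAbelianGroup (FGMod Λ)) :=
  AddSubgroup.closure (K0RelSet Λ)

/-- `K₀`: the free abelian group on finitely generated modules, modulo
`[A ⊕ B] = [A] + [B]` and `[P] = 0` for projective `P`. -/
def K0 := FreeAbelianGroup (FGMod Λ) ⧸ K0Rel Λ

instance : AddCommGroup (K0 Λ) := QuotientAddGroup.Quotient.addCommGroup _

/-- The class `[M]` of a finitely generated module in `K₀`. -/
def classOf (M : FGMod Λ) : K0 Λ := QuotientAddGroup.mk (FreeAbelianGroup.of M)

/-- Generators of the subgroup `L^t ⟨add M⟩` of `K₀`: classes of `t`-th syzygies of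
the indecomposable direct summands of `M`. -/
def addGens (M : ModuleCat.{0} Λ) (t : ℕ) : Set (K0 Λ) :=
  {k | ∃ X : ModuleCat.{0} Λ, Indec Λ X ∧ IsSummand Λ X M ∧
        ∃ Y : FGMod Λ, IsNthSyzygy Λ t Y.1 X ∧ k = classOf Λ Y}

/-- The rank of `L^t ⟨add M⟩`. -/
def syzygyRank (M : ModuleCat.{0} Λ) (t : ℕ) : Cardinal :=
  Module.rank ℤ (AddSubgroup.closure (addGens Λ M t))

/-- The Igusa–Todorov function
`φ(M) = min { t | rank L^t ⟨add M⟩ = rank L^{t+j} ⟨add M⟩ for all j ≥ 1 }`. -/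
def phi (M : ModuleCat.{0} Λ) : ℕ :=
  sInf {t : ℕ | ∀ j : ℕ, 1 ≤ j → syzygyRank Λ M (t + j) = syzygyRank Λ M t}

/-- `φdim Λ = sup { φ(M) | M a finitely generated Λ-module }`. -/
def phiDim : ℕ∞ := ⨆ M : FGMod Λ, (phi Λ M.1 : ℕ∞)

/-- Isomorphism of modules as a setoid on `ModuleCat Λ`. -/
def isoSetoid : Setoid (ModuleCat.{0} Λ) where
  r M N := Nonempty (M ≃ₗ[Λ] N)
  iseqv := ⟨fun M => ⟨LinearEquiv.refl Λ M⟩, fun ⟨e⟩ => ⟨e.symm⟩, fun ⟨e⟩ ⟨f⟩ => ⟨e.trans f⟩⟩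

/-- `α(X)`: the number of pairwise non-isomorphic, non-projective, indecomposable
direct summands of `X`. -/
def alpha (X : ModuleCat.{0} Λ) : ℕ :=
  Nat.card {c : Quotient (isoSetoid Λ) // ∃ Y : ModuleCat.{0} Λ,
    Quotient.mk (isoSetoid Λ) Y = c ∧ Indec Λ Y ∧ ¬ Module.Projective Λ Y ∧ IsSummand Λ Y X}

/-! ### Cyclic Nakayama algebras presented by monomial relations -/

/-- A cyclic Nakayama artin algebra `Λ` on `N ≥ 3` vertices, presented by an
irredundant system of `r` monomial relations `α_{k_{2j}} ⋯ α_{k_{2j-1}} = 0`.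

* `S i` (for `i : ZMod N`) are the simple modules attached to the vertices of the
  cyclic quiver, `P i` a projective cover of `S i`, and `c i` the composition length
  of `P i` (the Kupisch series).
* `layer` expresses that the arrows of the quiver are exactly `α_i : i → i+1`:
  the radical of an indecomposable module with top `S i`, when nonzero, has top `S (i+1)`.
* `kOdd j = k_{2j-1}` and `kEven j = k_{2j}` record the start and end indices of the
  `j`-th relation; irredundancy and completeness of the system of relations is recorded
  by `relation_starts` (the chain of inclusions `P_v ↪ P_{v-1}` breaks exactly at the
  starting vertices of the relations); `relation_ends` says that the `j`-th relation
  is a path from `k_{2j-1}` to `k_{2j} + 1` consisting of `c (k_{2j-1})` arrows. -/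
structure CyclicNakayama (R : Type) (Λ : Type) [CommRing R] [Ring Λ] [Algebra R Λ] where
  artinianBase : IsArtinianRing R
  finiteAlgebra : Module.Finite R Λ
  N : ℕ
  three_le_N : 3 ≤ N
  r : ℕ
  one_le_r : 1 ≤ r
  S : ZMod N → ModuleCat.{0} Λ
  S_simple : ∀ i, IsSimpleModule Λ (S i)
  S_complete : ∀ T : ModuleCat.{0} Λ, IsSimpleModule Λ T → ∃ i, Nonempty (T ≃ₗ[Λ] S i)
  S_distinct : ∀ i j, Nonempty (S i ≃ₗ[Λ] S j) → i = j
  nakayama : ∀ M : ModuleCat.{0} Λ, Module.Finite Λ M → Indec Λ M → IsUniserial Λ M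
  P : ZMod N → ModuleCat.{0} Λ
  P_finite : ∀ i, Module.Finite Λ (P i)
  P_projective : ∀ i, Module.Projective Λ (P i)
  P_cover : ∀ i, ∃ f : P i →ₗ[Λ] S i, IsProjCover Λ f
  c : ZMod N → ℕ
  P_length : ∀ i, HasLength Λ (P i) (c i)
  two_le_c : ∀ i, 2 ≤ c i
  layer : ∀ M : ModuleCat.{0} Λ, Module.Finite Λ M → Indec Λ M → ∀ i : ZMod N,
    TopIso Λ M (S i) → radical Λ M ≠ ⊥ →
      TopIso Λ (ModuleCat.of Λ (radical Λ M)) (S (i + 1))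
  kOdd : ZMod r → ZMod N
  kEven : ZMod r → ZMod N
  kOdd_mono : ∀ j j' : ZMod r, j.val < j'.val → (kOdd j).val < (kOdd j').val
  relation_starts : ∀ v : ZMod N, (∃ j, kOdd j = v) ↔ c v ≠ c (v + 1) + 1
  relation_ends : ∀ j, kEven j + 1 = kOdd j + (c (kOdd j) : ZMod N)
  soc_min : ∀ j, SocIso Λ (P (kOdd j)) (S (kEven j))
  soc_classes : ∀ v : ZMod N, ∃ j, SocIso Λ (P v) (S (kEven j))

variable {R : Type} [CommRing R]
variable {Λ} [Algebra R Λ]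

/-- `D` is (a representative of) the module `Δ_j`: a shortest indecomposable module
with top `S_{k_{2(j-1)} + 1}` and socle `S_{k_{2j}}`. -/
def IsDelta (pres : CyclicNakayama R Λ) (j : ZMod pres.r) (D : ModuleCat.{0} Λ) : Prop :=
  Module.Finite Λ D ∧ Indec Λ D ∧
    TopIso Λ D (pres.S (pres.kEven (j - 1) + 1)) ∧ SocIso Λ D (pres.S (pres.kEven j)) ∧
    ∀ D' : ModuleCat.{0} Λ, Module.Finite Λ D' → Indec Λ D' →
      TopIso Λ D' (pres.S (pres.kEven (j - 1) + 1)) → SocIso Λ D' (pres.S (pres.kEven j)) →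
      ∀ n n' : ℕ, HasLength Λ D n → HasLength Λ D' n' → n ≤ n'

/-- `M` is a `Δ`-module: it admits a finite filtration whose successive subquotients
are isomorphic to modules among `Δ_1, …, Δ_r`. -/
def IsDeltaModule (pres : CyclicNakayama R Λ) (Δ : ZMod pres.r → ModuleCat.{0} Λ)
    (M : ModuleCat.{0} Λ) : Prop :=
  ∃ (n : ℕ) (F : Fin (n + 1) → Submodule Λ M), Monotone F ∧ F 0 = ⊥ ∧ F (Fin.last n) = ⊤ ∧
    ∀ i : Fin n, ∃ j : ZMod pres.r,
      Nonempty ((F i.succ ⧸ Submodule.comap (F i.succ).subtype (F i.castSucc)) ≃ₗ[Λ] Δ j)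

end PhiDim

namespace PhiDim

/-! ### Syzygies and isomorphisms -/

section General

variable {Λ : Type} [Ring Λ]

/-- Projective covers, and hence syzygies, are unique up to isomorphism: a lift `g` between two
projective covers is onto because the kernel of the second is superfluous; it then splits, and its
section is onto because the kernel of the first is superfluous. -/
theorem IsSyzygy.equiv {Y Y' M M' : ModuleCat.{0} Λ} (e : M ≃ₗ[Λ] M')
    (h : IsSyzygy Λ Y M) (h' : IsSyzygy Λ Y' M') : Nonempty (Y ≃ₗ[Λ] Y') := by
  obtain ⟨P, f, ⟨hP, hf, hfs⟩, ⟨u⟩⟩ := h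
  obtain ⟨P', f', ⟨hP', hf', hfs'⟩, ⟨u'⟩⟩ := h'
  obtain ⟨g, hg⟩ := Module.projective_lifting_property f' (e.toLinearMap ∘ₗ f) hf'
  have hg' (x : P) : f' (g x) = e (f x) := LinearMap.congr_fun hg x
  have hgs : Function.Surjective g := by
    rw [← LinearMap.range_eq_top]
    apply hfs'
    rw [eq_top_iff]
    intro y _
    obtain ⟨x, hx⟩ := hf (e.symm (f' y))
    refine Submodule.mem_sup.2 ⟨g x, ⟨x, rfl⟩, y - g x, ?_, by abel⟩
    simp [hg', hx]
  obtain ⟨s, hs⟩ := Module.projective_lifting_property g LinearMap.id hgs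
  have hs' (y : P') : g (s y) = y := LinearMap.congr_fun hs y
  have hss : Function.Surjective s := by
    rw [← LinearMap.range_eq_top]
    apply hfs
    rw [eq_top_iff]
    intro x _
    refine Submodule.mem_sup.2 ⟨s (g x), ⟨_, rfl⟩, x - s (g x), ?_, by abel⟩
    rw [LinearMap.mem_ker]
    apply e.injective
    rw [← hg']
    simp [hs']
  have hgi : Function.Injective g := by
    intro x y hxy
    obtain ⟨a, rfl⟩ := hss x
    obtain ⟨b, rfl⟩ := hss y
    rw [hs', hs'] at hxy
    rw [hxy]
  let G := LinearEquiv.ofBijective g ⟨hgi, hgs⟩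
  have hmap : (LinearMap.ker f).map (G : P →ₗ[Λ] P') = LinearMap.ker f' := by
    ext y
    constructor
    · rintro ⟨x, hx, rfl⟩
      have hx' : f x = 0 := hx
      change f' (g x) = 0
      rw [hg', hx', map_zero]
    · intro hy
      obtain ⟨x, rfl⟩ := hgs y
      refine ⟨x, ?_, rfl⟩
      have hy' : f' (g x) = 0 := hy
      rw [hg'] at hy'
      exact e.injective (by simpa using hy')
  exact ⟨u.trans ((G.submoduleMap _).trans ((LinearEquiv.ofEq _ _ hmap).trans u'.symm))⟩

theorem IsSyzygy.congr {Y Y' M M' : ModuleCat.{0} Λ} (e : Y ≃ₗ[Λ] Y') (e' : M ≃ₗ[Λ] M')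
    (h : IsSyzygy Λ Y M) : IsSyzygy Λ Y' M' := by
  obtain ⟨P, f, ⟨hP, hf, hfs⟩, ⟨u⟩⟩ := h
  have hk : LinearMap.ker (e'.toLinearMap ∘ₗ f) = LinearMap.ker f := LinearEquiv.ker_comp e' f
  refine ⟨P, e'.toLinearMap ∘ₗ f, ⟨hP, e'.surjective.comp hf, ?_⟩,
    ⟨e.symm.trans (u.trans (LinearEquiv.ofEq _ _ hk.symm))⟩⟩
  rw [hk]
  exact hfs

theorem IsNthSyzygy.congr {n : ℕ} : ∀ {Y Y' M M' : ModuleCat.{0} Λ}, (Y ≃ₗ[Λ] Y') →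
    (M ≃ₗ[Λ] M') → IsNthSyzygy Λ n Y M → IsNthSyzygy Λ n Y' M' := by
  induction n with
  | zero =>
    rintro Y Y' M M' e e' ⟨u⟩
    exact ⟨e.symm.trans (u.trans e')⟩
  | succ n ih =>
    rintro Y Y' M M' e e' ⟨Z, hZ, hY⟩
    exact ⟨Z, hZ.congr (LinearEquiv.refl Λ Z) e', ih e (LinearEquiv.refl Λ Z) hY⟩

/-- In a sequence whose terms are successive syzygies, `z (i + k)` is a `k`-th syzygy of `z i`. -/
theorem isNthSyzygy_seq {z : ℕ → ModuleCat.{0} Λ} (hz : ∀ i, IsSyzygy Λ (z (i + 1)) (z i))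
    (k i : ℕ) : IsNthSyzygy Λ k (z (i + k)) (z i) := by
  induction k generalizing i with
  | zero => exact ⟨LinearEquiv.refl Λ _⟩
  | succ k ih =>
    refine ⟨z (i + 1), hz i, ?_⟩
    have := ih (i + 1)
    rwa [show i + 1 + k = i + (k + 1) by omega] at this

theorem IsNthSyzygy.equiv {n : ℕ} : ∀ {Y Y' M M' : ModuleCat.{0} Λ}, (M ≃ₗ[Λ] M') →
    IsNthSyzygy Λ n Y M → IsNthSyzygy Λ n Y' M' → Nonempty (Y ≃ₗ[Λ] Y') := by
  induction n with
  | zero =>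
    rintro Y Y' M M' e ⟨u⟩ ⟨u'⟩
    exact ⟨u.trans (e.trans u'.symm)⟩
  | succ n ih =>
    rintro Y Y' M M' e ⟨Z, hZ, hY⟩ ⟨Z', hZ', hY'⟩
    obtain ⟨v⟩ := hZ.equiv e hZ'
    exact ih v hY hY'

/-- The image of a superfluous submodule is superfluous. -/
theorem superfluous_map {P X : Type} [AddCommGroup P] [Module Λ P] [AddCommGroup X] [Module Λ X]
    (j : P →ₗ[Λ] X) {K : Submodule Λ P} (hK : ∀ N : Submodule Λ P, N ⊔ K = ⊤ → N = ⊤)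
    {W : Submodule Λ X} (hW : W ⊔ K.map j = ⊤) : W = ⊤ := by
  have hc : W.comap j = ⊤ := by
    apply hK
    rw [eq_top_iff]
    intro x _
    have hx : j x ∈ W ⊔ K.map j := by rw [hW]; trivial
    obtain ⟨w, hw, _, ⟨k, hk, rfl⟩, hwk⟩ := Submodule.mem_sup.1 hx
    refine Submodule.mem_sup.2 ⟨x - k, ?_, k, hk, by abel⟩
    rw [Submodule.mem_comap, map_sub, ← hwk, add_sub_cancel_right]
    exact hw
  have hle : K.map j ≤ W := Submodule.map_le_iff_le_comap.2 (hc ▸ le_top)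
  rwa [sup_eq_left.2 hle] at hW

/-- The direct sum of two projective covers is a projective cover. -/
theorem IsProjCover.prodMap {P Q M N : ModuleCat.{0} Λ} {f : P →ₗ[Λ] M} {g : Q →ₗ[Λ] N}
    (hf : IsProjCover Λ f) (hg : IsProjCover Λ g) :
    IsProjCover Λ (P := ModuleCat.of Λ (P × Q)) (M := ModuleCat.of Λ (M × N)) (f.prodMap g) := by
  obtain ⟨hP, hfs, hfk⟩ := hf
  obtain ⟨hQ, hgs, hgk⟩ := hg
  refine ⟨inferInstanceAs (Module.Projective Λ (P × Q)), hfs.prodMap hgs, ?_⟩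
  intro (W : Submodule Λ (P × Q)) (hW : W ⊔ LinearMap.ker (f.prodMap g) = ⊤)
  apply superfluous_map (LinearMap.inr Λ P Q) hgk
  apply superfluous_map (LinearMap.inl Λ P Q) hfk
  rw [eq_top_iff, ← hW, sup_assoc]
  refine sup_le_sup_left ?_ W
  rintro ⟨p, q⟩ hpq
  obtain ⟨hp, hq⟩ : f p = 0 ∧ g q = 0 := by simpa using hpq
  exact Submodule.mem_sup.2 ⟨(0, q), ⟨q, hq, rfl⟩, (p, 0), ⟨p, hp, rfl⟩, by simp⟩

theorem IsSyzygy.prod {Y Z M N : ModuleCat.{0} Λ} (h : IsSyzygy Λ Y M) (h' : IsSyzygy Λ Z N) :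
    IsSyzygy Λ (ModuleCat.of Λ (Y × Z)) (ModuleCat.of Λ (M × N)) := by
  obtain ⟨P, f, hf, ⟨u⟩⟩ := h
  obtain ⟨Q, g, hg, ⟨v⟩⟩ := h'
  have hk : LinearMap.ker (f.prodMap g) = (LinearMap.ker f).prod (LinearMap.ker g) :=
    LinearMap.ker_prodMap f g
  have hr : LinearMap.range ((LinearMap.ker f).subtype.prodMap (LinearMap.ker g).subtype) =
      LinearMap.ker (f.prodMap g) := by
    rw [LinearMap.range_prodMap, Submodule.range_subtype, Submodule.range_subtype, hk]
  have hi : Function.Injective ((LinearMap.ker f).subtype.prodMap (LinearMap.ker g).subtype) :=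
    (Submodule.subtype_injective _).prodMap (Submodule.subtype_injective _)
  exact ⟨_, _, hf.prodMap hg, ⟨(u.prodCongr v).trans
    ((LinearEquiv.ofInjective _ hi).trans (LinearEquiv.ofEq _ _ hr))⟩⟩

theorem isSyzygy_of_subsingleton {M : ModuleCat.{0} Λ} (hM : Subsingleton M) :
    IsSyzygy Λ M M := by
  have : Module.Projective Λ M :=
    Module.Projective.of_equiv (default : PUnit.{1} ≃ₗ[Λ] M)
  refine ⟨M, LinearMap.id, ⟨this, Function.surjective_id, fun N _ => Subsingleton.elim _ _⟩, ?_⟩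
  exact ⟨0⟩

/-! ### Sums of uniserial modules -/

/-- `M` is isomorphic to a direct sum of `n` finitely generated uniserial modules. The zero module
is uniserial, so this is a condition with at most `n` nonzero summands. -/
def IsUniserialSum (Λ : Type) [Ring Λ] : ℕ → ModuleCat.{0} Λ → Prop
  | 0, M => Subsingleton M
  | n + 1, M => ∃ U V : ModuleCat.{0} Λ, Module.Finite Λ U ∧ IsUniserial Λ U ∧
      IsUniserialSum Λ n V ∧ Nonempty (M ≃ₗ[Λ] (U × V))

theorem IsUniserialSum.congr {n : ℕ} {M M' : ModuleCat.{0} Λ} (e : M ≃ₗ[Λ] M')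
    (h : IsUniserialSum Λ n M) : IsUniserialSum Λ n M' := by
  cases n with
  | zero =>
    have : Subsingleton M := h
    exact e.symm.injective.subsingleton
  | succ n =>
    obtain ⟨U, V, hU, hU', hV, ⟨u⟩⟩ := h
    exact ⟨U, V, hU, hU', hV, ⟨e.symm.trans u⟩⟩

theorem IsUniserialSum.prod {m n : ℕ} : ∀ {M N : ModuleCat.{0} Λ}, IsUniserialSum Λ m M →
    IsUniserialSum Λ n N → IsUniserialSum Λ (m + n) (ModuleCat.of Λ (M × N)) := by
  induction m with
  | zero =>
    intro M N hM hN
    have : Unique M := @uniqueOfSubsingleton _ hM 0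
    rw [Nat.zero_add]
    exact hN.congr (LinearEquiv.uniqueProd (R := Λ) (M := N) (M₂ := M)).symm
  | succ m ih =>
    rintro M N ⟨U, V, hU, hU', hV, ⟨u⟩⟩ hN
    rw [Nat.succ_add]
    exact ⟨U, _, hU, hU', ih hV hN,
      ⟨(u.prodCongr (LinearEquiv.refl Λ N)).trans (LinearEquiv.prodAssoc Λ U V N)⟩⟩

theorem IsUniserial.of_injective {M N : ModuleCat.{0} Λ} (f : N →ₗ[Λ] M)
    (hf : Function.Injective f) (hM : IsUniserial Λ M) : IsUniserial Λ N := by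
  intro A B
  rw [← Submodule.map_le_map_iff_of_injective hf, ← Submodule.map_le_map_iff_of_injective hf B A]
  exact hM _ _

/-- If every indecomposable finitely generated module over an Artinian ring is uniserial, then
every finitely generated module is a finite direct sum of uniserial modules. -/
theorem exists_isUniserialSum [IsArtinianRing Λ]
    (hΛ : ∀ M : ModuleCat.{0} Λ, Module.Finite Λ M → Indec Λ M → IsUniserial Λ M)
    (M : ModuleCat.{0} Λ) (hM : Module.Finite Λ M) : ∃ n, IsUniserialSum Λ n M := by
  have key (W : Submodule Λ M) : ∃ n, IsUniserialSum Λ n (ModuleCat.of Λ W) := by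
    induction W using WellFoundedLT.induction with
    | ind W ih =>
    rcases subsingleton_or_nontrivial W with hW | hW
    · exact ⟨0, hW⟩
    by_cases hI : Indec Λ (ModuleCat.of Λ W)
    · have hz : IsUniserialSum Λ 0 (ModuleCat.of Λ PUnit) :=
        inferInstanceAs (Subsingleton PUnit)
      exact ⟨1, ModuleCat.of Λ W, ModuleCat.of Λ PUnit, inferInstanceAs (Module.Finite Λ W),
        hΛ _ (inferInstanceAs (Module.Finite Λ W)) hI, hz,
        ⟨(LinearEquiv.prodUnique (R := Λ) (M := W) (M₂ := PUnit)).symm⟩⟩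
    · have : ∃ N N' : Submodule Λ W, IsCompl N N' ∧ N ≠ ⊥ ∧ N' ≠ ⊥ := by
        by_contra! hcon
        refine hI ⟨hW, fun N N' h => ?_⟩
        by_cases hN : N = ⊥
        · exact Or.inl hN
        · exact Or.inr (hcon N N' h hN)
      obtain ⟨N, N', hc, hN, hN'⟩ := this
      have hlt (A : Submodule Λ W) (hA : A ≠ ⊤) : ∃ n, IsUniserialSum Λ n (ModuleCat.of Λ A) := by
        have hlt : A.map W.subtype < W := by
          have := Submodule.map_strictMono_of_injective W.subtype_injective (lt_top_iff_ne_top.2 hA)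
          rwa [Submodule.map_subtype_top] at this
        obtain ⟨n, hn⟩ := ih _ hlt
        exact ⟨n, hn.congr (Submodule.equivMapOfInjective _ W.subtype_injective A).symm⟩
      obtain ⟨a, ha⟩ := hlt N fun h => hN' (by simpa [h] using hc.disjoint)
      obtain ⟨b, hb⟩ := hlt N' fun h => hN (by simpa [h] using hc.disjoint)
      exact ⟨a + b, (ha.prod hb).congr (Submodule.prodEquivOfIsCompl N N' hc)⟩
  obtain ⟨n, hn⟩ := key ⊤
  exact ⟨n, hn.congr Submodule.topEquiv⟩

end General

/-! ### Uniserial modules over a cyclic Nakayama algebra -/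

section Nakayama

variable {R Λ : Type} [CommRing R] [Ring Λ] [Algebra R Λ]

theorem CyclicNakayama.isArtinianRing (pres : CyclicNakayama R Λ) : IsArtinianRing Λ := by
  have := pres.artinianBase
  have := pres.finiteAlgebra
  have : IsArtinian R Λ := inferInstance
  exact isArtinian_of_tower R this

/-- The projective `P i` has a largest proper submodule, namely the superfluous kernel of its map
onto the simple module `S i`. -/
theorem CyclicNakayama.eq_top_or_le_ker (pres : CyclicNakayama R Λ) {i : ZMod pres.N}
    {f : pres.P i →ₗ[Λ] pres.S i} (hf : IsProjCover Λ f) (N : Submodule Λ (pres.P i)) :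
    N = ⊤ ∨ N ≤ LinearMap.ker f := by
  have := pres.S_simple i
  have hc : IsCoatom (LinearMap.ker f) := LinearMap.isCoatom_ker_of_surjective hf.2.1
  by_cases hN : N ≤ LinearMap.ker f
  · exact Or.inr hN
  · exact Or.inl (hf.2.2 N (hc.2 _ (right_lt_sup.2 hN)))

theorem CyclicNakayama.isUniserial_P (pres : CyclicNakayama R Λ) (i : ZMod pres.N) :
    IsUniserial Λ (pres.P i) := by
  obtain ⟨f, hf⟩ := pres.P_cover i
  have := pres.S_simple i
  have : Nontrivial (pres.S i) := IsSimpleModule.nontrivial Λ _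
  refine pres.nakayama _ (pres.P_finite i) ⟨hf.2.1.nontrivial, fun N N' h => ?_⟩
  have hk : LinearMap.ker f ≠ ⊤ :=
    (LinearMap.isCoatom_ker_of_surjective hf.2.1).1
  rcases pres.eq_top_or_le_ker hf N with hN | hN
  · right; simpa [hN] using h.disjoint
  rcases pres.eq_top_or_le_ker hf N' with hN' | hN'
  · left; simpa [hN'] using h.disjoint
  · exact absurd (top_le_iff.1 (h.sup_eq_top ▸ sup_le hN hN')) hk

/-- A nonzero finitely generated uniserial module `U` has some `P i` as its projective cover: a
maximal submodule `m` has quotient `U ⧸ m ≅ S i` for some `i`, and `P i → S i` lifts to `U`. -/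
theorem IsUniserial.exists_projCover (pres : CyclicNakayama R Λ) {U : ModuleCat.{0} Λ}
    (hfin : Module.Finite Λ U) (hU : IsUniserial Λ U) (hne : Nontrivial U) :
    ∃ (i : ZMod pres.N) (g : pres.P i →ₗ[Λ] U), IsProjCover Λ g := by
  obtain ⟨m, hm, -⟩ := (eq_top_or_exists_le_coatom (⊥ : Submodule Λ U)).resolve_left bot_ne_top
  have hsimple : IsSimpleModule Λ (U ⧸ m) := isSimpleModule_iff_isCoatom.2 hm
  obtain ⟨i, ⟨e⟩⟩ := pres.S_complete (ModuleCat.of Λ (U ⧸ m)) hsimple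
  change (U ⧸ m) ≃ₗ[Λ] pres.S i at e
  obtain ⟨f, hf⟩ := pres.P_cover i
  have := pres.P_projective i
  obtain ⟨g, hg⟩ := Module.projective_lifting_property m.mkQ (e.symm.toLinearMap ∘ₗ f)
    m.mkQ_surjective
  have hg' (x) : m.mkQ (g x) = e.symm (f x) := LinearMap.congr_fun hg x
  have := pres.S_simple i
  have : Nontrivial (pres.S i) := IsSimpleModule.nontrivial Λ _
  obtain ⟨s, hs⟩ := exists_ne (0 : pres.S i)
  obtain ⟨x, rfl⟩ := hf.2.1 s
  refine ⟨i, g, pres.P_projective i, ?_, ?_⟩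
    -- the image of `g` is not contained in the maximal submodule `m`, so it contains `m` strictly
  · have hnot : ¬ LinearMap.range g ≤ m := by
      intro hle
      have h0 : m.mkQ (g x) = 0 := (Submodule.Quotient.mk_eq_zero m).2 (hle ⟨x, rfl⟩)
      rw [hg'] at h0
      exact hs (by simpa using h0)
    exact LinearMap.range_eq_top.1 (hm.2 _ (lt_of_le_not_ge ((hU _ _).resolve_left hnot) hnot))
  · intro N hN
    refine (pres.eq_top_or_le_ker hf N).resolve_right fun hle => ?_
    have hker : LinearMap.ker g ≤ LinearMap.ker f := by
      intro y (hy : g y = 0)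
      have := hg' y
      rw [hy, map_zero] at this
      exact e.symm.injective (by simpa using this.symm)
    have : f x = 0 := (top_le_iff.1 (hN ▸ sup_le hle hker) ▸ trivial : x ∈ LinearMap.ker f)
    exact hs this

theorem IsUniserial.exists_syzygy (pres : CyclicNakayama R Λ) {U : ModuleCat.{0} Λ}
    (hfin : Module.Finite Λ U) (hU : IsUniserial Λ U) :
    ∃ K : ModuleCat.{0} Λ, IsSyzygy Λ K U ∧ Module.Finite Λ K ∧ IsUniserial Λ K := by
  rcases subsingleton_or_nontrivial U with h | h
  · exact ⟨U, isSyzygy_of_subsingleton h, hfin, hU⟩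
  obtain ⟨i, g, hg⟩ := IsUniserial.exists_projCover pres hfin hU h
  have := pres.isArtinianRing
  have := pres.P_finite i
  exact ⟨ModuleCat.of Λ (LinearMap.ker g), ⟨_, g, hg, ⟨LinearEquiv.refl Λ _⟩⟩,
    inferInstanceAs (Module.Finite Λ (LinearMap.ker g)),
    (pres.isUniserial_P i).of_injective (LinearMap.ker g).subtype (Submodule.subtype_injective _)⟩

theorem IsUniserialSum.exists_syzygy (pres : CyclicNakayama R Λ) {n : ℕ} :
    ∀ {M : ModuleCat.{0} Λ}, IsUniserialSum Λ n M →
      ∃ K : ModuleCat.{0} Λ, IsSyzygy Λ K M ∧ IsUniserialSum Λ n K := by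
  induction n with
  | zero =>
    intro M hM
    exact ⟨M, isSyzygy_of_subsingleton hM, hM⟩
  | succ n ih =>
    rintro M ⟨U, V, hU, hU', hV, ⟨u⟩⟩
    obtain ⟨K, hK, hKf, hKu⟩ := IsUniserial.exists_syzygy pres hU hU'
    obtain ⟨L, hL, hLs⟩ := ih hV
    exact ⟨ModuleCat.of Λ (K × L), (hK.prod hL).congr (LinearEquiv.refl Λ _) u.symm,
      K, L, hKf, hKu, hLs, ⟨LinearEquiv.refl Λ _⟩⟩

/-! ### Finiteness -/

theorem CyclicNakayama.finite_submodule_P (pres : CyclicNakayama R Λ) (i : ZMod pres.N) :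
    Finite (Submodule Λ (pres.P i)) := by
  classical
  have := pres.isArtinianRing
  have := pres.P_finite i
  let inst : LinearOrder (Submodule Λ (pres.P i)) :=
    { (inferInstance : PartialOrder (Submodule Λ (pres.P i))) with
      le_total := pres.isUniserial_P i
      toDecidableLE := Classical.decRel _
      min := fun a b => if a ≤ b then a else b
      max := fun a b => if a ≤ b then b else a }
  have h1 : WellFoundedLT (Submodule Λ (pres.P i)) := inferInstanceAs (IsArtinian Λ (pres.P i))
  have h2 : WellFoundedGT (Submodule Λ (pres.P i)) := inferInstance
  exact @Finite.of_wellFoundedLT_wellFoundedGT _ inst h1 h2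

/-- Up to isomorphism there are finitely many finitely generated uniserial modules: the nonzero
ones are quotients of the `P i`, each of which has finitely many submodules. -/
theorem exists_finite_uniserial (pres : CyclicNakayama R Λ) :
    ∃ s : Set (ModuleCat.{0} Λ), s.Finite ∧ ∀ U : ModuleCat.{0} Λ, Module.Finite Λ U →
      IsUniserial Λ U → ∃ X ∈ s, Nonempty (U ≃ₗ[Λ] X) := by
  have : NeZero pres.N := ⟨by have := pres.three_le_N; omega⟩
  have := pres.finite_submodule_P
  let F : (Σ i : ZMod pres.N, Submodule Λ (pres.P i)) → ModuleCat.{0} Λ :=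
    fun x => ModuleCat.of Λ (pres.P x.1 ⧸ x.2)
  refine ⟨Set.range F, Set.finite_range F, fun U hfin hU => ?_⟩
  rcases subsingleton_or_nontrivial U with h | h
  · exact ⟨F ⟨0, ⊤⟩, ⟨_, rfl⟩, ⟨(default : U ≃ₗ[Λ] (pres.P 0 ⧸ (⊤ : Submodule Λ (pres.P 0))))⟩⟩
  · obtain ⟨i, g, hg⟩ := IsUniserial.exists_projCover pres hfin hU h
    exact ⟨F ⟨i, LinearMap.ker g⟩, ⟨_, rfl⟩, ⟨(g.quotKerEquivOfSurjective hg.2.1).symm⟩⟩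

theorem exists_finite_uniserialSum (pres : CyclicNakayama R Λ) (n : ℕ) :
    ∃ s : Set (ModuleCat.{0} Λ), s.Finite ∧ ∀ M : ModuleCat.{0} Λ, IsUniserialSum Λ n M →
      ∃ X ∈ s, Nonempty (M ≃ₗ[Λ] X) := by
  induction n with
  | zero =>
    refine ⟨{ModuleCat.of Λ PUnit}, Set.finite_singleton _, fun M hM => ⟨_, rfl, ?_⟩⟩
    have : Subsingleton M := hM
    exact ⟨(default : M ≃ₗ[Λ] PUnit)⟩
  | succ n ih =>
    obtain ⟨s, hs, hs'⟩ := ih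
    obtain ⟨t, ht, ht'⟩ := exists_finite_uniserial pres
    refine ⟨Set.image2 (fun X Y : ModuleCat.{0} Λ => ModuleCat.of Λ (X × Y)) t s, ht.image2 _ hs, ?_⟩
    rintro M ⟨U, V, hU, hU', hV, ⟨u⟩⟩
    obtain ⟨X, hX, ⟨v⟩⟩ := ht' U hU hU'
    obtain ⟨Y, hY, ⟨w⟩⟩ := hs' V hV
    exact ⟨_, Set.mem_image2_of_mem hX hY, ⟨u.trans (v.prodCongr w)⟩⟩

end Nakayama

/-- Over a cyclic Nakayama algebra of infinite global dimension, the syzygies of a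
module of infinite projective dimension are eventually `Ω`-periodic. -/
theorem syzygies_eventually_periodic {R Λ : Type} [CommRing R] [Ring Λ] [Algebra R Λ]
    (pres : CyclicNakayama R Λ) (hglob : HasInfiniteGlobalDim Λ)
    (M : ModuleCat.{0} Λ) (hfin : Module.Finite Λ M) (hpd : HasInfinitePdim Λ M) :
    ∃ k : ℕ, ∀ i : ℕ, k ≤ i → ∀ Y : ModuleCat.{0} Λ, IsNthSyzygy Λ i Y M → IsPeriodic Λ Y := by
  have := pres.isArtinianRing
  obtain ⟨n, hn⟩ := exists_isUniserialSum pres.nakayama M hfin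
  choose Ω hΩ hΩ' using fun X : {X : ModuleCat.{0} Λ // IsUniserialSum Λ n X} =>
    X.2.exists_syzygy pres
  let w : ℕ → {X : ModuleCat.{0} Λ // IsUniserialSum Λ n X} :=
    fun i => (fun X => ⟨Ω X, hΩ' X⟩)^[i] ⟨M, hn⟩
  let z : ℕ → ModuleCat.{0} Λ := fun i => (w i).1
  have hz (i : ℕ) : IsSyzygy Λ (z (i + 1)) (z i) := by
    have : w (i + 1) = ⟨Ω (w i), hΩ' (w i)⟩ := Function.iterate_succ_apply' _ _ _
    simp only [z, this]
    exact hΩ (w i)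
  have hzM (i : ℕ) : IsNthSyzygy Λ i (z i) M := by
    have h := isNthSyzygy_seq hz i 0
    rwa [Nat.zero_add] at h
  obtain ⟨s, hs, hs'⟩ := exists_finite_uniserialSum pres n
  choose rep hrep hiso using fun i => hs' (z i) (w i).2
  have := hs.to_subtype
  obtain ⟨a, b, hab, heq⟩ : ∃ a b, a < b ∧ rep a = rep b := by
    obtain ⟨a, b, hne, h⟩ :=
      Finite.exists_ne_map_eq_of_infinite (fun i => (⟨rep i, hrep i⟩ : s))
    have h : rep a = rep b := congrArg Subtype.val h
    rcases lt_or_gt_of_ne hne with hlt | hlt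
    exacts [⟨a, b, hlt, h⟩, ⟨b, a, hlt, h.symm⟩]
  obtain ⟨ea⟩ := hiso a
  obtain ⟨eb⟩ := hiso b
  rw [heq] at ea
  refine ⟨a, fun i hi Y hY => ⟨b - a, by omega, ?_⟩⟩
  obtain ⟨j, rfl⟩ := Nat.exists_eq_add_of_le hi
  obtain ⟨e⟩ := hY.equiv (LinearEquiv.refl Λ M) (hzM (a + j))
  obtain ⟨e'⟩ := (isNthSyzygy_seq hz j a).equiv (ea.trans eb.symm) (isNthSyzygy_seq hz j b)
  have h := isNthSyzygy_seq hz (b - a) (a + j)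
  rw [show a + j + (b - a) = b + j by omega] at h
  exact h.congr (e'.symm.trans e.symm) e.symm

end PhiDim
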